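/- arXiv:2409.03428 — 2 statements merged into one kernel-verified Lean document; each statement's English description precedes it below -/
import Mathlib

section
/- (Shanks) The following identity holds: ∑_{p ≡ 3 (mod 4)} 2·log p/(p² − 1) = ∑_{k=1}^{∞} ( L′(2^k, χ₋₄)/L(2^k, χ₋₄) − ζ′(2^k)/ζ(2^k) − log 2/(2^{2^k} − 1) ), where the left-hand sum runs over primes p ≡ 3 (mod 4), and both series converge. -/
open Filter

/-- The Dirichlet `L`-function `L(s, χ₋₄) = ∑_{n ≥ 1} χ₋₄(n) n^{-s}` of the
nontrivial character modulo 4. -/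
noncomputable def L4 (s : ℝ) : ℝ :=
  ∑' n : ℕ, ((ZMod.χ₄ (n : ZMod 4) : ℤ) : ℝ) * (n : ℝ) ^ (-s)

/-- The Riemann zeta function `ζ(s) = ∑_{n ≥ 1} n^{-s}` (as a real function,
valid in the range of arguments `s = 2^k ≥ 2` used below). -/
noncomputable def zetaR (s : ℝ) : ℝ :=
  ∑' n : ℕ, ((n : ℝ) + 1) ^ (-s)

/-!
Write `G(s) = ∑ 2 log p / (p ^ s - 1)` for the sum over the primes `p` with `χ(p) = -1`. Comparing
the Euler products of `L(s, χ)` and `ζ(s)` prime by prime, a prime with `χ(p) = 1` contributes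
nothing to `L'/L - ζ'/ζ`, a prime dividing the modulus contributes `log p / (p ^ s - 1)`, and,
since `1 / (x - 1) + 1 / (x + 1) = 2 / (x - 1) - 2 / (x ^ 2 - 1)` at `x = p ^ s`, the primes with
`χ(p) = -1` contribute `G(s) - G(2s)`. As `G(2s) ≤ G(s) / 2`, the sum over `s, 2s, 4s, …`
telescopes to `G(s)`.
-/

section RealLSeries

/-- The Dirichlet series `∑ f(n) n⁻ˢ` of a real sequence at a real argument. For `s ≠ 0` the term
at `n = 0` vanishes because `0 ^ (-s) = 0`. -/
noncomputable def realLSeries (f : ℕ → ℝ) (s : ℝ) : ℝ :=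
  ∑' n : ℕ, f n * (n : ℝ) ^ (-s)

variable {f : ℕ → ℝ} {s : ℝ}

lemma LSeries_term_ofReal (hs : s ≠ 0) (n : ℕ) :
    LSeries.term (fun n ↦ (f n : ℂ)) s n = ((f n * (n : ℝ) ^ (-s) : ℝ) : ℂ) := by
  rcases eq_or_ne n 0 with rfl | hn
  · simp [Real.zero_rpow (neg_ne_zero.mpr hs)]
  · rw [LSeries.term_of_ne_zero hn, Real.rpow_neg n.cast_nonneg, Complex.ofReal_mul,
      Complex.ofReal_inv, Complex.ofReal_cpow n.cast_nonneg, Complex.ofReal_natCast, div_eq_mul_inv]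

lemma LSeries_ofReal (hs : s ≠ 0) : LSeries (fun n ↦ (f n : ℂ)) s = realLSeries f s := by
  rw [LSeries, realLSeries, Complex.ofReal_tsum]
  exact tsum_congr (LSeries_term_ofReal hs)

lemma logDeriv_realLSeries (hs : s ≠ 0)
    (hf : LSeries.abscissaOfAbsConv (fun n ↦ (f n : ℂ)) < s) :
    logDeriv (realLSeries f) s = (logDeriv (LSeries fun n ↦ (f n : ℂ)) s).re := by
  have hderiv := (LSeries_hasDerivAt (s := s) hf).differentiableAt.hasDerivAt.real_of_complex
  have heq : realLSeries f =ᶠ[nhds s] fun x ↦ (LSeries (fun n ↦ (f n : ℂ)) x).re := by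
    filter_upwards [eventually_ne_nhds hs] with x hx
    rw [LSeries_ofReal hx, Complex.ofReal_re]
  rw [logDeriv_apply, logDeriv_apply, heq.deriv_eq, hderiv.deriv, LSeries_ofReal hs,
    Complex.div_ofReal_re]

lemma zetaR_eq_realLSeries (hs : s ≠ 0) : zetaR s = realLSeries 1 s := by
  have hsupp : Function.support (fun n : ℕ ↦ (n : ℝ) ^ (-s)) ⊆ Set.range Nat.succ := by
    rw [Nat.range_succ, Function.support_subset_iff']
    intro n hn
    rw [Nat.eq_zero_of_not_pos hn, Nat.cast_zero, Real.zero_rpow (neg_ne_zero.mpr hs)]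
  simpa [zetaR, realLSeries] using Nat.succ_injective.tsum_eq hsupp

lemma logDeriv_zetaR (hs : s ≠ 0) : logDeriv zetaR s = logDeriv (realLSeries 1) s :=
  (logDeriv_congr_nhds <| (eventually_ne_nhds hs).mono fun _ ↦ zetaR_eq_realLSeries).eq_of_nhds

end RealLSeries

section Series

lemma hasSum_prime_of_hasSum_primePow {α : Type*} [AddCommMonoid α] [TopologicalSpace α]
    [ContinuousAdd α] [RegularSpace α] {g h : ℕ → α} {a : α} (hg : HasSum g a)
    (hsupp : ∀ n, ¬IsPrimePow n → g n = 0)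
    (hh : ∀ p, p.Prime → HasSum (fun j : ℕ ↦ g (p ^ (j + 1))) (h p)) :
    HasSum (fun p : ℕ ↦ if p.Prime then h p else 0) a := by
  have hpow : HasSum (fun n : {n : ℕ // IsPrimePow n} ↦ g n) a :=
    (hasSum_subtype_iff_of_support_subset (s := {n | IsPrimePow n})
      (Function.support_subset_iff'.mpr hsupp)).mpr hg
  have hprimes : HasSum (fun p : Nat.Primes ↦ h p) a :=
    (Nat.Primes.prodNatEquiv.hasSum_iff.mpr hpow).prod_fiberwise fun p ↦ hh p p.prop
  refine (Nat.Primes.coe_nat_injective.hasSum_iff fun p hp ↦ if_neg ?_).mp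
    (hprimes.congr_fun fun p ↦ if_pos p.prop)
  simpa using hp

lemma hasSum_geometric_succ {𝕜 : Type*} [NormedDivisionRing 𝕜] {y : 𝕜} (hy : ‖y‖ < 1) :
    HasSum (fun j : ℕ ↦ y ^ (j + 1)) (y / (1 - y)) := by
  simpa only [pow_succ', div_eq_mul_inv] using (hasSum_geometric_of_norm_lt_one hy).mul_left y

lemma hasSum_sub_succ {α : Type*} [AddCommGroup α] [TopologicalSpace α]
    [IsTopologicalAddGroup α] {f : ℕ → α} (hf : Summable f) :
    HasSum (fun k ↦ f k - f (k + 1)) (f 0) := by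
  simpa using hf.hasSum.sub ((hasSum_nat_add_iff' 1).mpr hf.hasSum)

end Series

section RealCharacter

open ArithmeticFunction (vonMangoldt)

variable {N : ℕ} (χ : DirichletCharacter ℝ N) {s : ℝ}

lemma eq_one_or_neg_one_of_isUnit {a : ZMod N} (ha : IsUnit a) : χ a = 1 ∨ χ a = -1 :=
  eq_or_eq_neg_of_abs_eq (χ.unit_norm_eq_one ha.unit)

lemma hasSum_vonMangoldt_mul_rpow (hs : 1 < s) :
    HasSum (fun n : ℕ ↦ χ n * vonMangoldt n * (n : ℝ) ^ (-s))
      (-logDeriv (realLSeries fun n ↦ χ n) s) := by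
  let ψ : DirichletCharacter ℂ N := χ.ringHomComp Complex.ofRealHom
  have hs0 : s ≠ 0 := by positivity
  have hre : 1 < (s : ℂ).re := hs
  have habs : LSeries.abscissaOfAbsConv (fun n ↦ ψ n) < s :=
    (LSeries.abscissaOfAbsConv_le_of_le_const ⟨1, fun n _ ↦ ψ.norm_le_one n⟩).trans_lt
      (mod_cast hs)
  have hsum := (DirichletCharacter.LSeriesSummable_twist_vonMangoldt ψ hre).LSeriesHasSum
  rw [DirichletCharacter.LSeries_twist_vonMangoldt_eq ψ hre, neg_div] at hsum
  rw [logDeriv_realLSeries hs0 habs, logDeriv_apply, ← Complex.neg_re]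
  refine (Complex.hasSum_re hsum).congr_fun fun n ↦ ?_
  have hψ : (fun n : ℕ ↦ ψ n) * (fun n ↦ (vonMangoldt n : ℂ)) =
      fun n : ℕ ↦ ((χ n * vonMangoldt n : ℝ) : ℂ) := by
    ext n; simp [ψ]
  rw [hψ, LSeries_term_ofReal hs0, Complex.ofReal_re]

lemma hasSum_prime_pow_vonMangoldt {p : ℕ} (hp : p.Prime) (hs : 0 < s) :
    HasSum (fun j : ℕ ↦ χ (p ^ (j + 1) : ℕ) * vonMangoldt (p ^ (j + 1)) *
      ((p ^ (j + 1) : ℕ) : ℝ) ^ (-s)) (χ p * Real.log p / ((p : ℝ) ^ s - χ p)) := by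
  have hx : 1 < (p : ℝ) ^ s := Real.one_lt_rpow (mod_cast hp.one_lt) hs
  have hχ : |χ p| ≤ 1 := χ.norm_le_one p
  have hy : ‖χ p / (p : ℝ) ^ s‖ < 1 := by
    have hx0 : 0 < (p : ℝ) ^ s := zero_lt_one.trans hx
    rw [Real.norm_eq_abs, abs_div, abs_of_pos hx0, div_lt_one hx0]
    exact hχ.trans_lt hx
  have hne : (p : ℝ) ^ s - χ p ≠ 0 := by linarith [le_of_abs_le hχ]
  convert! (hasSum_geometric_succ hy).mul_left (Real.log p) using 1
  · ext j
    rw [ArithmeticFunction.vonMangoldt_apply_pow j.succ_ne_zero,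
      ArithmeticFunction.vonMangoldt_apply_prime hp, Nat.cast_pow, Nat.cast_pow, map_pow,
      ← Real.rpow_pow_comm p.cast_nonneg, Real.rpow_neg p.cast_nonneg]
    ring
  · field_simp

lemma hasSum_prime_neg_logDeriv (hs : 1 < s) :
    HasSum (fun p : ℕ ↦ if p.Prime then χ p * Real.log p / ((p : ℝ) ^ s - χ p) else 0)
      (-logDeriv (realLSeries fun n ↦ χ n) s) :=
  hasSum_prime_of_hasSum_primePow (hasSum_vonMangoldt_mul_rpow χ hs)
    (fun n hn ↦ by simp [ArithmeticFunction.vonMangoldt_eq_zero_iff.mpr hn])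
    fun _ hp ↦ hasSum_prime_pow_vonMangoldt χ hp (by positivity)

lemma hasSum_prime_neg_logDeriv_zetaR (hs : 1 < s) :
    HasSum (fun p : ℕ ↦ if p.Prime then Real.log p / ((p : ℝ) ^ s - 1) else 0)
      (-logDeriv zetaR s) := by
  have hone (n : ℕ) : (1 : DirichletCharacter ℝ 1) n = 1 :=
    MulChar.one_apply (isUnit_of_subsingleton _)
  rw [logDeriv_zetaR (by positivity)]
  simpa only [hone, one_mul, ← Pi.one_def] using
    hasSum_prime_neg_logDeriv (1 : DirichletCharacter ℝ 1) hs

/-- The summand of the left-hand side of Shanks' identity: `2 log p / (pˢ - 1)` at the primes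
with `χ(p) = -1`, which for primitive `χ ≠ 1` are the inert primes of the quadratic field of `χ`,
and `0` at every other number. -/
noncomputable def inertTerm (s : ℝ) (p : ℕ) : ℝ :=
  if p.Prime ∧ χ p = -1 then 2 * Real.log p / ((p : ℝ) ^ s - 1) else 0

/-- The logarithmic derivative of `L(s, χ) / ζ(s)`, where the Euler factors at the primes dividing
the modulus have been removed from `ζ`. -/
noncomputable def logDerivRatio (s : ℝ) : ℝ :=
  logDeriv (realLSeries fun n ↦ χ n) s - logDeriv zetaR s -
    ∑ p ∈ N.primeFactors, Real.log p / ((p : ℝ) ^ s - 1)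

lemma log_div_rpow_sub_one_nonneg {x : ℝ} (hx : 1 ≤ x) (hs : 0 ≤ s) :
    0 ≤ Real.log x / (x ^ s - 1) :=
  div_nonneg (Real.log_nonneg hx) (sub_nonneg.mpr (Real.one_le_rpow hx hs))

lemma inertTerm_nonneg (hs : 0 ≤ s) (p : ℕ) : 0 ≤ inertTerm χ s p := by
  rw [inertTerm]
  split_ifs with h
  · rw [mul_div_assoc]
    exact mul_nonneg zero_le_two (log_div_rpow_sub_one_nonneg (mod_cast h.1.one_le) hs)
  · rfl

lemma summable_inertTerm (hs : 1 < s) : Summable (inertTerm χ s) := by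
  refine .of_nonneg_of_le (inertTerm_nonneg χ (by positivity)) (fun p ↦ ?_)
    ((hasSum_prime_neg_logDeriv_zetaR hs).summable.mul_left 2)
  rw [inertTerm, ite_and]
  split_ifs with hp hχ
  · rw [mul_div_assoc]
  · exact mul_nonneg zero_le_two
      (log_div_rpow_sub_one_nonneg (mod_cast hp.one_le) (by positivity))
  · simp

lemma inertTerm_two_mul_le (hs : 0 < s) (p : ℕ) :
    inertTerm χ (2 * s) p ≤ inertTerm χ s p / 2 := by
  simp only [inertTerm]
  split_ifs with h
  · have hp : 1 < (p : ℝ) := mod_cast h.1.one_lt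
    have hlog := Real.log_pos hp
    have hx : 1 < (p : ℝ) ^ s := Real.one_lt_rpow hp hs
    rw [two_mul s, Real.rpow_add (by positivity), div_div]
    gcongr
    nlinarith
  · simp

lemma eulerFactor_logDeriv_sub [NeZero N] {p : ℕ} (hp : p.Prime) (hs : 0 < s) :
    Real.log p / ((p : ℝ) ^ s - 1) - χ p * Real.log p / ((p : ℝ) ^ s - χ p) =
      (if p ∈ N.primeFactors then Real.log p / ((p : ℝ) ^ s - 1) else 0) +
        (inertTerm χ s p - inertTerm χ (2 * s) p) := by
  have hx : 1 < (p : ℝ) ^ s := Real.one_lt_rpow (mod_cast hp.one_lt) hs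
  by_cases hpN : p ∣ N
  · have hχ : χ p = 0 := χ.map_nonunit (by rwa [ZMod.isUnit_prime_iff_not_dvd hp, not_not])
    simp [inertTerm, hχ, hp, hpN, NeZero.ne N]
  rcases eq_one_or_neg_one_of_isUnit χ ((ZMod.isUnit_prime_iff_not_dvd hp).mpr hpN) with hχ | hχ
  · norm_num [inertTerm, hχ, hpN]
  · have hsq : (p : ℝ) ^ (2 * s) - 1 = ((p : ℝ) ^ s - 1) * ((p : ℝ) ^ s + 1) := by
      rw [two_mul, Real.rpow_add (mod_cast hp.pos)]; ring
    have hsub : (p : ℝ) ^ s - 1 ≠ 0 := by linarith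
    have hadd : (p : ℝ) ^ s + 1 ≠ 0 := by linarith
    simp only [inertTerm, hχ, hp, hpN, hsq, Nat.mem_primeFactors, false_and, and_false, and_self,
      ite_true, ite_false, sub_neg_eq_add]
    field_simp
    ring

lemma logDerivRatio_eq_sub [NeZero N] (hs : 1 < s) :
    logDerivRatio χ s = ∑' p, inertTerm χ s p - ∑' p, inertTerm χ (2 * s) p := by
  have hramified : HasSum
      (fun p ↦ if p ∈ N.primeFactors then Real.log p / ((p : ℝ) ^ s - 1) else 0)
      (∑ p ∈ N.primeFactors, Real.log p / ((p : ℝ) ^ s - 1)) := by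
    simpa only [Finset.sum_ite_mem, Finset.inter_self] using
      hasSum_sum_of_ne_finset_zero (L := .unconditional ℕ) fun p (hp : p ∉ N.primeFactors) ↦
        if_neg (t := Real.log p / ((p : ℝ) ^ s - 1)) hp
  have heuler := ((hasSum_prime_neg_logDeriv_zetaR hs).sub (hasSum_prime_neg_logDeriv χ hs)).sub
    hramified
  have hinert := (summable_inertTerm χ hs).hasSum.sub
    (summable_inertTerm χ (by linarith : 1 < 2 * s)).hasSum
  have hterm := heuler.congr_fun (g := fun p ↦ inertTerm χ s p - inertTerm χ (2 * s) p) fun p ↦ by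
    by_cases hp : p.Prime
    · simp only [if_pos hp, eulerFactor_logDeriv_sub χ hp (by positivity : 0 < s),
        add_sub_cancel_left]
    · simp [inertTerm, hp]
  rw [hinert.unique hterm, logDerivRatio]
  ring

lemma tsum_inertTerm_two_pow_mul_le (hs : 1 < s) (k : ℕ) :
    ∑' p, inertTerm χ (2 ^ k * s) p ≤ (1 / 2) ^ k * ∑' p, inertTerm χ s p := by
  induction k with
  | zero => simp
  | succ k ih =>
    have hk : 1 < 2 ^ k * s := one_lt_mul (one_le_pow₀ one_le_two) hs
    calc ∑' p, inertTerm χ (2 ^ (k + 1) * s) p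
        = ∑' p, inertTerm χ (2 * (2 ^ k * s)) p := by rw [pow_succ', mul_assoc]
      _ ≤ ∑' p, inertTerm χ (2 ^ k * s) p / 2 :=
        (summable_inertTerm χ (by linarith)).tsum_le_tsum
          (inertTerm_two_mul_le χ (by positivity)) ((summable_inertTerm χ hk).div_const 2)
      _ = (∑' p, inertTerm χ (2 ^ k * s) p) / 2 := tsum_div_const
      _ ≤ (1 / 2) ^ (k + 1) * ∑' p, inertTerm χ s p := by rw [pow_succ]; linarith

lemma summable_tsum_inertTerm (hs : 1 < s) :
    Summable fun k : ℕ ↦ ∑' p, inertTerm χ (2 ^ k * s) p :=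
  .of_nonneg_of_le (fun _ ↦ tsum_nonneg (inertTerm_nonneg χ (by positivity)))
    (tsum_inertTerm_two_pow_mul_le χ hs)
    ((summable_geometric_of_lt_one (by norm_num) (by norm_num)).mul_right _)

lemma hasSum_logDerivRatio [NeZero N] (hs : 1 < s) :
    HasSum (fun k : ℕ ↦ logDerivRatio χ (2 ^ k * s)) (∑' p, inertTerm χ s p) := by
  have htele := hasSum_sub_succ (summable_tsum_inertTerm χ hs)
  rw [pow_zero, one_mul] at htele
  refine htele.congr_fun fun k ↦ ?_
  rw [logDerivRatio_eq_sub χ (one_lt_mul (one_le_pow₀ one_le_two) hs), pow_succ', mul_assoc]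

end RealCharacter

theorem shanks_identity_general {N : ℕ} [NeZero N] (χ : DirichletCharacter ℝ N) {s : ℝ}
    (hs : 1 < s) :
    Summable (inertTerm χ s) ∧ Summable (fun k : ℕ ↦ logDerivRatio χ (2 ^ k * s)) ∧
      ∑' p, inertTerm χ s p = ∑' k : ℕ, logDerivRatio χ (2 ^ k * s) :=
  have htele := hasSum_logDerivRatio χ hs
  ⟨summable_inertTerm χ hs, htele.summable, htele.tsum_eq.symm⟩

section ModFour

/-- The character `χ₋₄` with real values. -/
noncomputable def realχ₄ : DirichletCharacter ℝ 4 :=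
  ZMod.χ₄.ringHomComp (Int.castRingHom ℝ)

lemma realχ₄_eq_neg_one_iff (n : ℕ) : realχ₄ n = -1 ↔ n % 4 = 3 := by
  have h : realχ₄ n = -1 ↔ ZMod.χ₄ n = -1 := by
    rw [realχ₄, MulChar.ringHomComp_apply, eq_intCast]
    norm_cast
  rw [h, ZMod.χ₄_nat_mod_four]
  have := Nat.mod_lt n four_pos
  interval_cases n % 4 <;> decide

lemma inertTerm_realχ₄_two : inertTerm realχ₄ 2 = fun p : ℕ ↦
    if p.Prime ∧ p % 4 = 3 then 2 * Real.log p / ((p : ℝ) ^ 2 - 1) else 0 := by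
  ext p
  simp only [inertTerm, realχ₄_eq_neg_one_iff, Real.rpow_two]

lemma logDerivRatio_realχ₄_two_pow_mul_two (k : ℕ) : logDerivRatio realχ₄ (2 ^ k * 2) =
    deriv L4 (2 ^ (k + 1)) / L4 (2 ^ (k + 1)) -
      deriv zetaR (2 ^ (k + 1)) / zetaR (2 ^ (k + 1)) -
      Real.log 2 / (2 ^ (2 ^ (k + 1)) - 1) := by
  have hL : (realLSeries fun n ↦ realχ₄ n) = L4 := rfl
  have h4 : Nat.primeFactors 4 = {2} := Nat.primeFactors_prime_pow two_ne_zero Nat.prime_two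
  have hpow : (2 : ℝ) ^ ((2 : ℝ) ^ (k + 1)) = 2 ^ (2 ^ (k + 1)) := by
    exact_mod_cast Real.rpow_natCast (2 : ℝ) (2 ^ (k + 1))
  simp only [logDerivRatio, hL, h4, Finset.sum_singleton, logDeriv_apply, ← pow_succ,
    Nat.cast_ofNat, hpow]

end ModFour

/-- Shanks' identity:
`∑_{p ≡ 3 (4)} 2 log p/(p²-1)
 = ∑_{k ≥ 1} (L′(2^k,χ₋₄)/L(2^k,χ₋₄) - ζ′(2^k)/ζ(2^k) - log 2/(2^{2^k}-1))`,
with both series converging. -/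
theorem shanks_identity :
    Summable (fun p : ℕ => if Nat.Prime p ∧ p % 4 = 3 then
      2 * Real.log p / ((p : ℝ) ^ 2 - 1) else 0) ∧
    Summable (fun k : ℕ =>
      deriv L4 (2 ^ (k + 1)) / L4 (2 ^ (k + 1)) -
        deriv zetaR (2 ^ (k + 1)) / zetaR (2 ^ (k + 1)) -
        Real.log 2 / (2 ^ (2 ^ (k + 1)) - 1)) ∧
    (∑' p : ℕ, if Nat.Prime p ∧ p % 4 = 3 then
      2 * Real.log p / ((p : ℝ) ^ 2 - 1) else 0) =
    ∑' k : ℕ,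
      (deriv L4 (2 ^ (k + 1)) / L4 (2 ^ (k + 1)) -
        deriv zetaR (2 ^ (k + 1)) / zetaR (2 ^ (k + 1)) -
        Real.log 2 / (2 ^ (2 ^ (k + 1)) - 1)) := by
  simpa only [inertTerm_realχ₄_two, logDerivRatio_realχ₄_two_pow_mul_two] using
    shanks_identity_general realχ₄ one_lt_two
end

section
/- (Ramanujan; proved by Bhargava–Berndt) Let μ be the positive real number defined by (π/2)·μ/√2 = ∫₀¹ dx/√(1−x⁴). Suppose 0 < θ ≤ π/2 and 0 < v ≤ 1 satisfy θ·μ/√2 = ∫₀^v dx/√(1−x⁴). Then μ²/(2v²) = csc²θ − 1/π − 8·∑_{n=1}^{∞} n·cos(2nθ)/(e^{2πn} − 1). -/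
open Real

/-!
Summing the Weierstrass function `℘` of `ℤ + ℤτ` row by row, with `∑ 1 / (z + n)² = π² / sin² (πz)`
and its expansion in powers of `exp (2πiz)` on every row but the central one, gives `℘` as
`π² / sin² (πz)` minus `G₂(τ)` minus a Lambert series. At `τ = i` the transformation law of `G₂`
gives `G₂(i) = π`, so the right-hand side of Ramanujan's formula is `P(θ) = ℘(θ / π) / π²`.

Multiplication by `i` forces `g₃ = 0`, so `P'² = 4 P (P² - e²)` with `e = P(π / 2)`. Hence
`s = √(e / P)` satisfies `s' = √e √(1 - s⁴)`, that is, the lemniscate integral of `s(θ)` is `√e θ`.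
Comparing with the two given relations yields `μ / √2 = √e` and `v = s(θ)`.
-/

namespace RamanujanLemniscate

open Complex Filter Topology Set
open scoped UpperHalfPlane

section SineSeries

lemma tsum_int_one_div_add_sq_of_im_pos {z : ℂ} (hz : 0 < z.im) :
    ∑' n : ℤ, 1 / (z + n) ^ 2 = π ^ 2 / sin (π * z) ^ 2 := by
  have hsin : sin (π * z) ≠ 0 :=
    sin_pi_mul_ne_zero (UpperHalfPlane.coe_mem_integerComplement ⟨z, hz⟩)
  have hcot : HasDerivAt (fun x : ℂ ↦ π * cot (π * x)) (-(π ^ 2 / sin (π * z) ^ 2)) z := by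
    have hlin : HasDerivAt (fun x : ℂ ↦ π * x) π z := by
      simpa using (hasDerivAt_id z).const_mul (π : ℂ)
    convert! ((hlin.ccos.div hlin.csin hsin).const_mul (π : ℂ)) using 1
    field_simp
    linear_combination Complex.sin_sq_add_cos_sq (π * z)
  have hseries := iteratedDerivWithin_cot_pi_mul_eq_mul_tsum_div_pow le_rfl hz
  rw [iteratedDerivWithin_one, derivWithin_of_isOpen UpperHalfPlane.isOpen_upperHalfPlaneSet hz,
    hcot.deriv] at hseries
  norm_num at hseries
  simpa using hseries.symm

lemma pi_sq_div_sin_sq_eq_tsum_exp {z : ℂ} (hz : 0 < z.im) :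
    π ^ 2 / sin (π * z) ^ 2 = -4 * π ^ 2 * ∑' n : ℕ, n * cexp (2 * π * I * z) ^ n := by
  rw [← tsum_int_one_div_add_sq_of_im_pos hz]
  have hq := EisensteinSeries.qExpansion_identity le_rfl ⟨z, hz⟩
  simp only [Nat.reduceAdd, Nat.factorial_one, Nat.cast_one, div_one, pow_one, mul_pow, I_sq] at hq
  rw [hq]
  ring

lemma summable_int_one_div_add_sq (z : ℂ) : Summable fun n : ℤ ↦ 1 / (z + n) ^ 2 := by
  simpa using EisensteinSeries.linear_right_summable z 1 (k := 2) le_rfl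

/- For real `z` the identity is the limit `t → 0⁺` of the identity at `z + tI`. -/
lemma tsum_int_one_div_add_sq_of_im_nonneg {z : ℂ} (hz : z ∈ integerComplement) (him : 0 ≤ z.im) :
    ∑' n : ℤ, 1 / (z + n) ^ 2 = π ^ 2 / sin (π * z) ^ 2 := by
  have hlim : Tendsto (fun t : ℝ ↦ z + t * I) (𝓝[>] 0) (𝓝 z) := by
    have : Continuous fun t : ℝ ↦ z + t * I := by fun_prop
    simpa using (this.tendsto 0).mono_left nhdsWithin_le_nhds
  have hseries : Tendsto (fun t : ℝ ↦ ∑' n : ℤ, 1 / (z + t * I + n) ^ 2) (𝓝[>] 0)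
      (𝓝 (∑' n : ℤ, 1 / (z + n) ^ 2)) := by
    refine tendsto_tsum_of_dominated_convergence (summable_int_one_div_add_sq z).norm
      (fun n ↦ ?_) ?_
    · exact tendsto_const_nhds.div ((hlim.add_const _).pow 2)
        (pow_ne_zero _ (integerComplement_add_ne_zero hz n))
    · filter_upwards [self_mem_nhdsWithin] with t (ht : 0 < t) n
      have hpos : 0 < ‖z + n‖ := norm_pos_iff.mpr (integerComplement_add_ne_zero hz n)
      have hle : ‖z + n‖ ≤ ‖z + t * I + n‖ := by
        rw [norm_def, norm_def]
        refine Real.sqrt_le_sqrt ?_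
        simp only [normSq_apply, add_re, add_im, mul_re, mul_im, ofReal_re, ofReal_im, I_re, I_im,
          intCast_re, intCast_im]
        nlinarith
      rw [norm_div, norm_div, norm_pow, norm_pow]
      gcongr
  have hsin : Tendsto (fun t : ℝ ↦ π ^ 2 / sin (π * (z + t * I)) ^ 2) (𝓝[>] 0)
      (𝓝 (π ^ 2 / sin (π * z) ^ 2)) :=
    tendsto_const_nhds.div (((Complex.continuous_sin.tendsto _).comp (hlim.const_mul _)).pow 2)
      (pow_ne_zero _ (sin_pi_mul_ne_zero hz))
  refine tendsto_nhds_unique hseries (hsin.congr' ?_)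
  filter_upwards [self_mem_nhdsWithin] with t (ht : 0 < t)
  exact (tsum_int_one_div_add_sq_of_im_pos (by simpa using by linarith)).symm

lemma tsum_int_one_div_add_sq {z : ℂ} (hz : z ∈ integerComplement) :
    ∑' n : ℤ, 1 / (z + n) ^ 2 = π ^ 2 / sin (π * z) ^ 2 := by
  rcases le_total 0 z.im with him | him
  · exact tsum_int_one_div_add_sq_of_im_nonneg hz him
  have hneg : -z ∈ integerComplement := fun ⟨n, hn⟩ ↦ hz ⟨-n, by simp [hn]⟩
  rw [← (Equiv.neg ℤ).tsum_eq]
  convert! tsum_int_one_div_add_sq_of_im_nonneg hneg (by simpa using him) using 1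
  · refine tsum_congr fun n ↦ ?_
    rw [Equiv.neg_apply, Int.cast_neg, ← neg_sq]
    ring_nf
  · rw [mul_neg, Complex.sin_neg, neg_sq]

end SineSeries

section Lambert

variable {𝕜 : Type*} [NormedField 𝕜] {q u : 𝕜}

lemma hasSum_natCast_mul_pow_mul_pow (hq : ‖q‖ < 1) (n : ℕ) :
    HasSum (fun m : ℕ ↦ (n : 𝕜) * (u * q ^ m) ^ n) (n * u ^ n / (1 - q ^ n)) := by
  rcases n.eq_zero_or_pos with rfl | hn
  · simp
  · have hqn : ‖q ^ n‖ < 1 := by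
      rw [norm_pow]
      exact pow_lt_one₀ (norm_nonneg q) hq hn.ne'
    rw [div_eq_mul_inv]
    refine ((hasSum_geometric_of_norm_lt_one hqn).mul_left (n * u ^ n)).congr_fun fun m ↦ ?_
    ring

variable [CompleteSpace 𝕜]

lemma summable_natCast_mul_pow_mul_pow (hq : ‖q‖ < 1) (hu : ‖u‖ < 1) :
    Summable fun p : ℕ × ℕ ↦ (p.2 : 𝕜) * (u * q ^ p.1) ^ p.2 := by
  have hgeom : Summable fun m : ℕ ↦ ‖q‖ ^ m := summable_geometric_of_norm_lt_one (by simpa using hq)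
  have harith : Summable fun n : ℕ ↦ ‖(n : 𝕜) * u ^ n‖ := by
    simpa using summable_norm_pow_mul_geometric_of_norm_lt_one 1 hu
  refine .of_norm_bounded (hgeom.mul_of_nonneg harith (fun m ↦ by positivity)
    fun n ↦ norm_nonneg _) ?_
  rintro ⟨m, n⟩
  rcases n.eq_zero_or_pos with rfl | hn
  · simp
  · have hpow : ‖q‖ ^ (m * n) ≤ ‖q‖ ^ m :=
      pow_le_pow_of_le_one (norm_nonneg q) hq.le (Nat.le_mul_of_pos_right m hn)
    calc ‖(n : 𝕜) * (u * q ^ m) ^ n‖ = ‖q‖ ^ (m * n) * ‖(n : 𝕜) * u ^ n‖ := by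
          rw [mul_pow, ← pow_mul, ← mul_assoc, norm_mul, norm_pow, mul_comm]
      _ ≤ ‖q‖ ^ m * ‖(n : 𝕜) * u ^ n‖ := by gcongr

lemma summable_lambert (hq : ‖q‖ < 1) (hu : ‖u‖ < 1) :
    Summable fun n : ℕ ↦ n * u ^ n / (1 - q ^ n) :=
  ((summable_natCast_mul_pow_mul_pow hq hu).prod_symm.hasSum.prod_fiberwise
    (hasSum_natCast_mul_pow_mul_pow hq)).summable

lemma hasSum_tsum_natCast_mul_pow_mul_pow (hq : ‖q‖ < 1) (hu : ‖u‖ < 1) :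
    HasSum (fun m : ℕ ↦ ∑' n : ℕ, (n : 𝕜) * (u * q ^ m) ^ n)
      (∑' n : ℕ, n * u ^ n / (1 - q ^ n)) := by
  have hs := summable_natCast_mul_pow_mul_pow hq hu
  have htsum : ∑' n : ℕ, n * u ^ n / (1 - q ^ n) =
      ∑' p : ℕ × ℕ, (p.2 : 𝕜) * (u * q ^ p.1) ^ p.2 := by
    rw [← (Equiv.prodComm ℕ ℕ).tsum_eq]
    exact (hs.prod_symm.hasSum.prod_fiberwise (hasSum_natCast_mul_pow_mul_pow hq)).tsum_eq
  rw [htsum]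
  exact hs.hasSum.prod_fiberwise fun m ↦ (hs.prod_factor m).hasSum

end Lambert

section WeierstrassP

variable {τ : ℍ} {z : ℂ}

/-- The period pair `(1, τ)`, generating the lattice `ℤ + ℤτ`. -/
noncomputable def unitPeriodPair (τ : ℍ) : PeriodPair where
  ω₁ := 1
  ω₂ := τ
  indep := by
    refine LinearIndependent.pair_iff.mpr fun s t h ↦ ?_
    have him := congrArg im h
    have hre := congrArg re h
    simp only [real_smul, mul_one, add_im, ofReal_im, im_ofReal_mul, zero_add, zero_im, mul_eq_zero,
      UpperHalfPlane.coe_im, τ.im_ne_zero, or_false] at him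
    simpa [him] using hre

lemma mem_lattice_unitPeriodPair :
    z ∈ (unitPeriodPair τ).lattice ↔ ∃ m n : ℤ, m + n * (τ : ℂ) = z := by
  simp [PeriodPair.mem_lattice, unitPeriodPair]

lemma add_int_mul_mem_integerComplement (hz : z ∉ (unitPeriodPair τ).lattice) (m : ℤ) :
    z + m * τ ∈ integerComplement := by
  rintro ⟨n, hn⟩
  exact hz (mem_lattice_unitPeriodPair.mpr ⟨n, -m, by push_cast; linear_combination hn⟩)

lemma hasSum_weierstrassP_unitPeriodPair (hz : z ∉ (unitPeriodPair τ).lattice) :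
    HasSum (fun m : ℤ ↦ π ^ 2 / sin (π * (z + m * τ)) ^ 2 - EisensteinSeries.e2Summand m τ)
      ((unitPeriodPair τ).weierstrassP z) := by
  let e : ℤ × ℤ ≃ (unitPeriodPair τ).lattice :=
    ((Equiv.prodComm ℤ ℤ).trans (unitPeriodPair τ).latticeEquivProd.symm.toEquiv).trans
      (Equiv.neg _)
  have he (p : ℤ × ℤ) : (e p : ℂ) = -(p.1 * τ + p.2) := by
    refine congrArg Neg.neg (((unitPeriodPair τ).latticeEquiv_symm_apply p.swap).trans ?_)
    simp [unitPeriodPair, add_comm]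
  refine (e.hasSum_iff.mpr ((unitPeriodPair τ).hasSum_weierstrassP z)).prod_fiberwise fun m ↦ ?_
  rw [← tsum_int_one_div_add_sq (add_int_mul_mem_integerComplement hz m)]
  refine ((summable_int_one_div_add_sq (z + m * τ)).hasSum.sub
    (EisensteinSeries.e2Summand_summable m τ).hasSum).congr_fun fun n ↦ ?_
  simp only [one_div, Function.comp_apply, he, EisensteinSeries.eisSummand, Matrix.cons_val_zero,
    Matrix.cons_val_one, Matrix.cons_val_fin_one, Int.reduceNeg, zpow_neg, zpow_ofNat]
  ring_nf

lemma hasSum_pi_sq_div_sin_sq_nat (hz : -τ.im < z.im) :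
    HasSum (fun m : ℕ ↦ π ^ 2 / sin (π * (z + (m + 1) * τ)) ^ 2)
      (-4 * π ^ 2 * ∑' n : ℕ, n * cexp (2 * π * I * (z + τ)) ^ n /
        (1 - cexp (2 * π * I * τ) ^ n)) := by
  have hq : ‖cexp (2 * π * I * τ)‖ < 1 := τ.norm_exp_two_pi_I_lt_one
  have hu : ‖cexp (2 * π * I * (z + τ))‖ < 1 :=
    UpperHalfPlane.norm_exp_two_pi_I_lt_one ⟨z + τ, by simpa using by linarith⟩
  refine ((hasSum_tsum_natCast_mul_pow_mul_pow hq hu).mul_left _).congr_fun fun m ↦ ?_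
  have hm : 0 < (z + (m + 1) * τ).im := by
    have : 0 ≤ m * τ.im := by have := τ.im_pos; positivity
    simp only [add_im, mul_im, add_re, natCast_re, one_re, UpperHalfPlane.coe_im, natCast_im,
      one_im, add_zero, zero_mul]
    linarith
  have hexp : cexp (2 * π * I * (z + (m + 1) * τ)) =
      cexp (2 * π * I * (z + τ)) * cexp (2 * π * I * τ) ^ m := by
    rw [← Complex.exp_nat_mul, ← Complex.exp_add]
    ring_nf
  rw [pi_sq_div_sin_sq_eq_tsum_exp hm, hexp]

lemma tsum_lambert_add_tsum_lambert (hz : |z.im| < τ.im) :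
    ∑' n : ℕ, n * cexp (2 * π * I * (z + τ)) ^ n / (1 - cexp (2 * π * I * τ) ^ n) +
      ∑' n : ℕ, n * cexp (2 * π * I * (-z + τ)) ^ n / (1 - cexp (2 * π * I * τ) ^ n) =
    2 * ∑' n : ℕ, n * cos (2 * π * n * z) * cexp (2 * π * I * τ) ^ n /
      (1 - cexp (2 * π * I * τ) ^ n) := by
  obtain ⟨hneg, hpos⟩ := abs_lt.mp hz
  have hq : ‖cexp (2 * π * I * τ)‖ < 1 := τ.norm_exp_two_pi_I_lt_one
  have hu : ‖cexp (2 * π * I * (z + τ))‖ < 1 :=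
    UpperHalfPlane.norm_exp_two_pi_I_lt_one ⟨z + τ, by simpa using by linarith⟩
  have hu' : ‖cexp (2 * π * I * (-z + τ))‖ < 1 :=
    UpperHalfPlane.norm_exp_two_pi_I_lt_one ⟨-z + τ, by simpa using by linarith⟩
  rw [← (summable_lambert hq hu).tsum_add (summable_lambert hq hu'), ← tsum_mul_left]
  refine tsum_congr fun n ↦ ?_
  have hcos : cexp (2 * π * I * (z + τ)) ^ n + cexp (2 * π * I * (-z + τ)) ^ n =
      2 * cos (2 * π * n * z) * cexp (2 * π * I * τ) ^ n := by
    rw [two_cos, add_mul]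
    simp only [← Complex.exp_nat_mul, ← Complex.exp_add]
    ring_nf
  linear_combination n / (1 - cexp (2 * π * I * τ) ^ n) * hcos

lemma hasSum_pi_sq_div_sin_sq_int (hz : |z.im| < τ.im) :
    HasSum (fun m : ℤ ↦ π ^ 2 / sin (π * (z + m * τ)) ^ 2)
      (π ^ 2 / sin (π * z) ^ 2 - 8 * π ^ 2 * ∑' n : ℕ, n * cos (2 * π * n * z) *
        cexp (2 * π * I * τ) ^ n / (1 - cexp (2 * π * I * τ) ^ n)) := by
  obtain ⟨hneg, hpos⟩ := abs_lt.mp hz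
  have hnonneg : HasSum (fun m : ℕ ↦ π ^ 2 / sin (π * (z + (m : ℤ) * τ)) ^ 2)
      (-4 * π ^ 2 * (∑' n : ℕ, n * cexp (2 * π * I * (z + τ)) ^ n /
        (1 - cexp (2 * π * I * τ) ^ n)) + π ^ 2 / sin (π * z) ^ 2) := by
    simpa using (hasSum_nat_add_iff (f := fun m : ℕ ↦ π ^ 2 / sin (π * (z + (m : ℤ) * τ)) ^ 2) 1).mp
      (by simpa using hasSum_pi_sq_div_sin_sq_nat hneg)
  have hnegSucc : HasSum (fun m : ℕ ↦ π ^ 2 / sin (π * (z + (-(m + 1 : ℤ) : ℤ) * τ)) ^ 2)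
      (-4 * π ^ 2 * ∑' n : ℕ, n * cexp (2 * π * I * (-z + τ)) ^ n /
        (1 - cexp (2 * π * I * τ) ^ n)) := by
    refine (hasSum_pi_sq_div_sin_sq_nat (z := -z) (by simpa using hpos)).congr_fun fun m ↦ ?_
    rw [← neg_sq (Complex.sin _), ← Complex.sin_neg]
    push_cast
    ring_nf
  have hint := HasSum.of_nat_of_neg_add_one
    (f := fun m : ℤ ↦ π ^ 2 / sin (π * (z + m * τ)) ^ 2) hnonneg hnegSucc
  rwa [add_right_comm, ← mul_add, tsum_lambert_add_tsum_lambert hz, add_comm, ← mul_assoc,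
    show -4 * (π : ℂ) ^ 2 * 2 = -(8 * π ^ 2) by ring, neg_mul, ← sub_eq_add_neg] at hint

lemma weierstrassP_unitPeriodPair (hz : z ∉ (unitPeriodPair τ).lattice) (him : |z.im| < τ.im) :
    (unitPeriodPair τ).weierstrassP z =
      π ^ 2 / sin (π * z) ^ 2 - EisensteinSeries.G2 τ - 8 * π ^ 2 * ∑' n : ℕ,
        n * cos (2 * π * n * z) * cexp (2 * π * I * τ) ^ n / (1 - cexp (2 * π * I * τ) ^ n) := by
  have hG2 := (hasSum_pi_sq_div_sin_sq_int him).sub (hasSum_weierstrassP_unitPeriodPair hz)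
  simp only [sub_sub_cancel] at hG2
  rw [EisensteinSeries.G2, tsum_eq_of_summable_unconditional hG2.summable, hG2.tsum_eq]
  ring

end WeierstrassP

lemma G2_I : EisensteinSeries.G2 UpperHalfPlane.I = π := by
  have hS : ModularGroup.S • UpperHalfPlane.I = UpperHalfPlane.I := by
    rw [UpperHalfPlane.modular_S_smul]
    ext
    simp
  have htransform := EisensteinSeries.G2_S_transform UpperHalfPlane.I
  rw [hS, UpperHalfPlane.coe_I, I_sq, mul_div_cancel_right₀ _ I_ne_zero, inv_neg_one] at htransform
  linear_combination htransform / 2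

section PeriodPair

variable {L : PeriodPair}

lemma G_eq_zero_of_mul_mem_lattice_iff {ζ : ℂ} {n : ℕ} (hζ : ζ ≠ 0)
    (hmem : ∀ l, ζ * l ∈ L.lattice ↔ l ∈ L.lattice) (hn : ζ ^ n ≠ 1) : L.G n = 0 := by
  let e : L.lattice ≃ L.lattice := (Equiv.mulLeft₀ ζ hζ).subtypeEquiv fun l ↦ (hmem l).symm
  have hG : L.G n = (ζ ^ n)⁻¹ * L.G n := by
    rw [PeriodPair.G, ← tsum_mul_left, ← e.tsum_eq]
    refine tsum_congr fun l ↦ ?_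
    rw [← mul_inv, ← mul_pow]
    rfl
  have hn' : (ζ ^ n)⁻¹ ≠ 1 := by simpa using hn
  by_contra hne
  exact hn' ((mul_eq_right₀ hne).mp hG.symm)

lemma derivWeierstrassP_half {l : ℂ} (hl : l ∈ L.lattice) : L.derivWeierstrassP (l / 2) = 0 := by
  have hadd := L.derivWeierstrassP_add_coe (-(l / 2)) ⟨l, hl⟩
  rw [show -(l / 2) + l = l / 2 by ring, L.derivWeierstrassP_neg] at hadd
  linear_combination hadd / 2

lemma derivWeierstrassP_sq_of_g₃_eq_zero (hg₃ : L.g₃ = 0) {l z : ℂ} (hl : l ∈ L.lattice)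
    (hl2 : l / 2 ∉ L.lattice) (hne : L.weierstrassP (l / 2) ≠ 0) (hz : z ∉ L.lattice) :
    L.derivWeierstrassP z ^ 2 =
      4 * L.weierstrassP z * (L.weierstrassP z ^ 2 - L.weierstrassP (l / 2) ^ 2) := by
  have hhalf := L.derivWeierstrassP_sq _ hl2
  rw [derivWeierstrassP_half hl, hg₃] at hhalf
  have hg₂ : L.g₂ = 4 * L.weierstrassP (l / 2) ^ 2 :=
    mul_left_cancel₀ hne (by linear_combination hhalf)
  rw [L.derivWeierstrassP_sq z hz, hg₂, hg₃]
  ring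

end PeriodPair

section LambertSeries

lemma natCast_pow_three_div_exp_sub_one_le (n : ℕ) :
    (n : ℝ) ^ 3 / (Real.exp (2 * π * n) - 1) ≤ 15 / (4 * π ^ 5) * (1 / (n : ℝ) ^ 2) := by
  rcases n.eq_zero_or_pos with rfl | hn
  · simp
  have hy : 0 < 2 * π * n := by positivity
  have hexp : (2 * π * n) ^ 5 / 120 ≤ Real.exp (2 * π * n) - 1 := by
    have hsum := Real.sum_le_exp_of_nonneg hy.le 6
    simp only [Finset.sum_range_succ, Finset.sum_range_zero, Nat.factorial] at hsum
    norm_num at hsum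
    have : 0 ≤ 2 * π * n + (2 * π * n) ^ 2 / 2 + (2 * π * n) ^ 3 / 6 + (2 * π * n) ^ 4 / 24 := by
      positivity
    linarith
  calc (n : ℝ) ^ 3 / (Real.exp (2 * π * n) - 1) ≤ n ^ 3 / ((2 * π * n) ^ 5 / 120) := by gcongr
    _ = 15 / (4 * π ^ 5) * (1 / (n : ℝ) ^ 2) := by field_simp; norm_num

lemma natCast_pow_three_div_exp_sub_one_nonneg (n : ℕ) :
    0 ≤ (n : ℝ) ^ 3 / (Real.exp (2 * π * n) - 1) :=
  div_nonneg (by positivity) (sub_nonneg.mpr (Real.one_le_exp (by positivity)))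

lemma summable_natCast_pow_three_div_exp_sub_one :
    Summable fun n : ℕ ↦ (n : ℝ) ^ 3 / (Real.exp (2 * π * n) - 1) :=
  .of_nonneg_of_le natCast_pow_three_div_exp_sub_one_nonneg natCast_pow_three_div_exp_sub_one_le
    (hasSum_zeta_two.summable.mul_left _)

lemma tsum_natCast_pow_three_div_exp_sub_one_lt_one_div_32 :
    ∑' n : ℕ, (n : ℝ) ^ 3 / (Real.exp (2 * π * n) - 1) < 1 / 32 := by
  calc ∑' n : ℕ, (n : ℝ) ^ 3 / (Real.exp (2 * π * n) - 1)
      ≤ ∑' n : ℕ, 15 / (4 * π ^ 5) * (1 / (n : ℝ) ^ 2) :=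
        summable_natCast_pow_three_div_exp_sub_one.tsum_le_tsum
          natCast_pow_three_div_exp_sub_one_le (hasSum_zeta_two.summable.mul_left _)
    _ = 5 / (8 * π ^ 3) := by
        rw [tsum_mul_left, hasSum_zeta_two.tsum_eq]
        field_simp
        norm_num
    _ < 5 / (8 * 3 ^ 3) := by gcongr; exact pi_gt_three
    _ < 1 / 32 := by norm_num

/-- The Lambert series `∑ n cos(2nθ) / (e^{2πn} - 1)` of Ramanujan's formula. It is summed over all
of `ℕ` since the term at `n = 0` is `0 / 0 = 0`. -/
noncomputable def lambertCos (θ : ℝ) : ℝ :=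
  ∑' n : ℕ, n * Real.cos (2 * n * θ) / (Real.exp (2 * π * n) - 1)

lemma norm_natCast_mul_cos_div_le (θ : ℝ) (n : ℕ) :
    ‖n * Real.cos (2 * n * θ) / (Real.exp (2 * π * n) - 1)‖ ≤
      (n : ℝ) ^ 3 / (Real.exp (2 * π * n) - 1) := by
  have hden : 0 ≤ Real.exp (2 * π * n) - 1 := sub_nonneg.mpr (Real.one_le_exp (by positivity))
  have hcube : (n : ℝ) ≤ n ^ 3 := mod_cast Nat.le_self_pow (by norm_num) n
  rw [norm_div, norm_mul, Real.norm_natCast, Real.norm_of_nonneg hden]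
  gcongr
  exact (mul_le_of_le_one_right n.cast_nonneg (Real.abs_cos_le_one _)).trans hcube

lemma summable_lambertCos (θ : ℝ) :
    Summable fun n : ℕ ↦ n * Real.cos (2 * n * θ) / (Real.exp (2 * π * n) - 1) :=
  .of_norm_bounded summable_natCast_pow_three_div_exp_sub_one (norm_natCast_mul_cos_div_le θ)

lemma continuous_lambertCos : Continuous lambertCos :=
  continuous_tsum (fun n ↦ by fun_prop) summable_natCast_pow_three_div_exp_sub_one
    fun n θ ↦ norm_natCast_mul_cos_div_le θ n

lemma lambertCos_lt_one_div_32 (θ : ℝ) : lambertCos θ < 1 / 32 :=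
  ((summable_lambertCos θ).tsum_le_tsum
    (fun n ↦ (le_abs_self _).trans (norm_natCast_mul_cos_div_le θ n))
    summable_natCast_pow_three_div_exp_sub_one).trans_lt
      tsum_natCast_pow_three_div_exp_sub_one_lt_one_div_32

lemma abs_sin_natCast_mul_le (n : ℕ) (x : ℝ) : |Real.sin (n * x)| ≤ n * |Real.sin x| := by
  induction n with
  | zero => simp
  | succ n ih =>
    calc |Real.sin ((n + 1 : ℕ) * x)|
        = |Real.sin (n * x) * Real.cos x + Real.cos (n * x) * Real.sin x| := by
          rw [← Real.sin_add]; push_cast; ring_nf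
      _ ≤ |Real.sin (n * x)| * |Real.cos x| + |Real.cos (n * x)| * |Real.sin x| := by
          simpa only [abs_mul] using
            abs_add_le (Real.sin (n * x) * Real.cos x) (Real.cos (n * x) * Real.sin x)
      _ ≤ n * |Real.sin x| * 1 + 1 * |Real.sin x| := by
          gcongr <;> exact Real.abs_cos_le_one _
      _ = (n + 1 : ℕ) * |Real.sin x| := by push_cast; ring

lemma abs_cos_two_natCast_mul_sub_le (n : ℕ) (a b : ℝ) :
    |Real.cos (2 * n * a) - Real.cos (2 * n * b)| ≤
      2 * n ^ 2 * |Real.sin a ^ 2 - Real.sin b ^ 2| := by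
  have hprod : Real.sin a ^ 2 - Real.sin b ^ 2 = Real.sin (a + b) * Real.sin (a - b) := by
    rw [Real.sin_add, Real.sin_sub]
    linear_combination Real.sin b ^ 2 * Real.sin_sq_add_cos_sq a
      - Real.sin a ^ 2 * Real.sin_sq_add_cos_sq b
  have hcos : Real.cos (2 * n * a) - Real.cos (2 * n * b) =
      -2 * Real.sin (n * (a + b)) * Real.sin (n * (a - b)) := by
    rw [Real.cos_sub_cos]
    ring_nf
  calc |Real.cos (2 * n * a) - Real.cos (2 * n * b)|
      = 2 * (|Real.sin (n * (a + b))| * |Real.sin (n * (a - b))|) := by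
        rw [hcos, abs_mul, abs_mul, abs_neg, abs_two, mul_assoc]
    _ ≤ 2 * ((n * |Real.sin (a + b)|) * (n * |Real.sin (a - b)|)) := by
        gcongr <;> exact abs_sin_natCast_mul_le n _
    _ = 2 * n ^ 2 * |Real.sin a ^ 2 - Real.sin b ^ 2| := by rw [hprod, abs_mul]; ring

lemma lambertCos_sub_le (a b : ℝ) :
    lambertCos a - lambertCos b ≤ |Real.sin a ^ 2 - Real.sin b ^ 2| / 16 := by
  have hterm (n : ℕ) : n * Real.cos (2 * n * a) / (Real.exp (2 * π * n) - 1) -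
      n * Real.cos (2 * n * b) / (Real.exp (2 * π * n) - 1) ≤
      2 * |Real.sin a ^ 2 - Real.sin b ^ 2| * (n ^ 3 / (Real.exp (2 * π * n) - 1)) := by
    have hden : 0 ≤ Real.exp (2 * π * n) - 1 := sub_nonneg.mpr (Real.one_le_exp (by positivity))
    rw [← sub_div, ← mul_div_assoc, ← mul_sub]
    refine div_le_div_of_nonneg_right ?_ hden
    calc n * (Real.cos (2 * n * a) - Real.cos (2 * n * b))
        ≤ n * (2 * n ^ 2 * |Real.sin a ^ 2 - Real.sin b ^ 2|) := by
          gcongr; exact (le_abs_self _).trans (abs_cos_two_natCast_mul_sub_le n a b)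
      _ = 2 * |Real.sin a ^ 2 - Real.sin b ^ 2| * n ^ 3 := by ring
  calc lambertCos a - lambertCos b
      ≤ 2 * |Real.sin a ^ 2 - Real.sin b ^ 2| *
          ∑' n : ℕ, (n : ℝ) ^ 3 / (Real.exp (2 * π * n) - 1) := by
        rw [lambertCos, lambertCos, ← (summable_lambertCos a).tsum_sub (summable_lambertCos b),
          ← tsum_mul_left]
        exact ((summable_lambertCos a).sub (summable_lambertCos b)).tsum_le_tsum hterm
          (summable_natCast_pow_three_div_exp_sub_one.mul_left _)
    _ ≤ 2 * |Real.sin a ^ 2 - Real.sin b ^ 2| * (1 / 32) := by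
        gcongr; exact tsum_natCast_pow_three_div_exp_sub_one_lt_one_div_32.le
    _ = |Real.sin a ^ 2 - Real.sin b ^ 2| / 16 := by ring

end LambertSeries

lemma hasDerivAt_re_of_ofReal {f : ℝ → ℝ} {c : ℂ} {x : ℝ}
    (hf : HasDerivAt (fun t ↦ (f t : ℂ)) c x) : HasDerivAt f c.re x ∧ (c.re : ℂ) = c := by
  have hre : HasDerivAt f c.re x := reCLM.hasFDerivAt.comp_hasDerivAt x hf
  exact ⟨hre, hre.ofReal_comp.unique hf⟩

section GaussianLattice

variable {θ : ℝ}

/-- The right-hand side of Ramanujan's formula, a real form of `℘`: its value at `θ` is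
`℘(θ / π) / π²` for the lattice `ℤ + ℤI`. -/
noncomputable def realP (θ : ℝ) : ℝ :=
  (Real.sin θ)⁻¹ ^ 2 - 1 / π - 8 * lambertCos θ

lemma realP_pi_div_two_pos : 0 < realP (π / 2) := by
  have hlambert := lambertCos_lt_one_div_32 (π / 2)
  have hpi : 1 / π < 1 / 3 := by gcongr; exact pi_gt_three
  rw [realP, Real.sin_pi_div_two]
  linarith

lemma sin_pos_of_mem_Ioc (hθ : θ ∈ Ioc 0 (π / 2)) : 0 < Real.sin θ :=
  Real.sin_pos_of_pos_of_lt_pi hθ.1 (by linarith [hθ.2, pi_pos])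

lemma strictAntiOn_realP : StrictAntiOn realP (Ioc 0 (π / 2)) := by
  intro a ha b hb hab
  have hsa := sin_pos_of_mem_Ioc ha
  have hsb := sin_pos_of_mem_Ioc hb
  have hsin : Real.sin a < Real.sin b :=
    Real.sin_lt_sin_of_lt_of_le_pi_div_two (by linarith [ha.1, pi_pos]) hb.2 hab
  have hgap : 0 < Real.sin b ^ 2 - Real.sin a ^ 2 := by nlinarith
  have hinv : Real.sin b ^ 2 - Real.sin a ^ 2 ≤ (Real.sin a)⁻¹ ^ 2 - (Real.sin b)⁻¹ ^ 2 := by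
    have hprod : Real.sin a ^ 2 * Real.sin b ^ 2 ≤ 1 :=
      mul_le_one₀ (Real.sin_sq_le_one a) (sq_nonneg _) (Real.sin_sq_le_one b)
    calc Real.sin b ^ 2 - Real.sin a ^ 2
        ≤ (Real.sin b ^ 2 - Real.sin a ^ 2) / (Real.sin a ^ 2 * Real.sin b ^ 2) :=
          le_div_self hgap.le (by positivity) hprod
      _ = (Real.sin a)⁻¹ ^ 2 - (Real.sin b)⁻¹ ^ 2 := by field_simp
  have hlambert := lambertCos_sub_le a b
  rw [abs_sub_comm, abs_of_pos hgap] at hlambert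
  rw [realP, realP]
  linarith

lemma realP_pos (hθ : θ ∈ Ioc 0 (π / 2)) : 0 < realP θ :=
  realP_pi_div_two_pos.trans_le
    (strictAntiOn_realP.antitoneOn hθ (right_mem_Ioc.mpr pi_div_two_pos) hθ.2)

/-- The period pair `(1, I)`, generating the Gaussian integers. -/
noncomputable abbrev gaussianPeriods : PeriodPair := unitPeriodPair UpperHalfPlane.I

lemma div_pi_notMem_lattice (hθ : Real.sin θ ≠ 0) : (θ / π : ℂ) ∉ gaussianPeriods.lattice := by
  rw [mem_lattice_unitPeriodPair]
  rintro ⟨m, n, hmn⟩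
  rw [← ofReal_div, UpperHalfPlane.coe_I] at hmn
  have hre := congrArg re hmn
  simp only [add_re, intCast_re, mul_re, I_re, mul_zero, intCast_im, I_im, mul_one, sub_self,
    add_zero, ofReal_re] at hre
  rw [eq_div_iff pi_ne_zero] at hre
  exact hθ (hre ▸ Real.sin_int_mul_pi m)

lemma ofReal_lambertCos (θ : ℝ) :
    ∑' n : ℕ, n * Complex.cos (2 * π * n * (θ / π)) * cexp (2 * π * I * UpperHalfPlane.I) ^ n /
      (1 - cexp (2 * π * I * UpperHalfPlane.I) ^ n) = (lambertCos θ : ℂ) := by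
  rw [lambertCos, ofReal_tsum]
  refine tsum_congr fun n ↦ ?_
  have hcos : (2 * π * n * (θ / π) : ℂ) = 2 * n * θ := by field_simp [pi_ne_zero]
  have hq : cexp (2 * π * I * UpperHalfPlane.I) ^ n = (cexp (2 * π * n))⁻¹ := by
    rw [← Complex.exp_nat_mul, ← Complex.exp_neg, UpperHalfPlane.coe_I]
    congr 1
    linear_combination (2 * π * n : ℂ) * I_sq
  have hne := Complex.exp_ne_zero (2 * π * n)
  rw [hcos, hq, ← div_div_div_cancel_right₀ hne]
  push_cast
  field_simp

lemma weierstrassP_gaussianPeriods (hθ : Real.sin θ ≠ 0) :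
    gaussianPeriods.weierstrassP (θ / π) = (π ^ 2 * realP θ : ℝ) := by
  have him : |(θ / π : ℂ).im| < UpperHalfPlane.I.im := by
    rw [← ofReal_div, ofReal_im]
    simp
  have hpi : (π : ℂ) ≠ 0 := ofReal_ne_zero.mpr pi_ne_zero
  rw [weierstrassP_unitPeriodPair (div_pi_notMem_lattice hθ) him, G2_I, ofReal_lambertCos,
    mul_div_cancel₀ _ hpi, realP]
  push_cast
  field_simp

lemma hasDerivAt_ofReal_realP (hθ : Real.sin θ ≠ 0) :
    HasDerivAt (fun t ↦ (realP t : ℂ)) (gaussianPeriods.derivWeierstrassP (θ / π) / π ^ 3) θ := by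
  have hpi : (π : ℂ) ≠ 0 := ofReal_ne_zero.mpr pi_ne_zero
  have hP : HasDerivAt gaussianPeriods.weierstrassP
      (gaussianPeriods.derivWeierstrassP (θ / π)) (θ / π) := by
    rw [← PeriodPair.deriv_weierstrassP]
    exact (gaussianPeriods.differentiableOn_weierstrassP.differentiableAt
      (gaussianPeriods.isClosed_lattice.isOpen_compl.mem_nhds
        (div_pi_notMem_lattice hθ))).hasDerivAt
  have hcomp : HasDerivAt (fun t : ℝ ↦ gaussianPeriods.weierstrassP (t / π) / π ^ 2)
      (gaussianPeriods.derivWeierstrassP (θ / π) * (1 / π) / π ^ 2) θ :=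
    (hP.comp (θ : ℂ) ((hasDerivAt_id (θ : ℂ)).div_const (π : ℂ))).comp_ofReal.div_const _
  convert! hcomp.congr_of_eventuallyEq ?_ using 1
  · ring
  · filter_upwards [Real.continuous_sin.continuousAt.eventually_ne hθ] with t ht
    rw [weierstrassP_gaussianPeriods ht]
    push_cast
    field_simp

lemma differentiableAt_realP (hθ : Real.sin θ ≠ 0) : DifferentiableAt ℝ realP θ :=
  (hasDerivAt_re_of_ofReal (hasDerivAt_ofReal_realP hθ)).1.differentiableAt

lemma derivWeierstrassP_gaussianPeriods (hθ : Real.sin θ ≠ 0) :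
    gaussianPeriods.derivWeierstrassP (θ / π) = (π ^ 3 * deriv realP θ : ℝ) := by
  have hpi : (π : ℂ) ≠ 0 := ofReal_ne_zero.mpr pi_ne_zero
  obtain ⟨hderiv, hre⟩ := hasDerivAt_re_of_ofReal (hasDerivAt_ofReal_realP hθ)
  rw [hderiv.deriv, ofReal_mul, hre]
  push_cast
  field_simp

lemma g₃_gaussianPeriods : gaussianPeriods.g₃ = 0 := by
  have hmem (l : ℂ) (hl : l ∈ gaussianPeriods.lattice) : I * l ∈ gaussianPeriods.lattice := by
    obtain ⟨m, n, rfl⟩ := mem_lattice_unitPeriodPair.mp hl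
    refine mem_lattice_unitPeriodPair.mpr ⟨-n, m, ?_⟩
    rw [UpperHalfPlane.coe_I]
    push_cast
    linear_combination -n * I_sq
  have hiff (l : ℂ) : I * l ∈ gaussianPeriods.lattice ↔ l ∈ gaussianPeriods.lattice := by
    refine ⟨fun hl ↦ ?_, hmem l⟩
    rw [show l = -(I * (I * l)) by linear_combination l * I_sq]
    exact neg_mem (hmem _ hl)
  have hI : I ^ 6 ≠ 1 := by
    rw [show I ^ 6 = (I ^ 2) ^ 3 by ring, I_sq]
    norm_num
  rw [PeriodPair.g₃, G_eq_zero_of_mul_mem_lattice_iff I_ne_zero hiff hI, mul_zero]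

lemma deriv_realP_sq (hθ : Real.sin θ ≠ 0) :
    deriv realP θ ^ 2 = 4 * realP θ * (realP θ ^ 2 - realP (π / 2) ^ 2) := by
  have hpi : (π : ℂ) ≠ 0 := ofReal_ne_zero.mpr pi_ne_zero
  have hsin : Real.sin (π / 2) ≠ 0 := by simp
  have hone : (1 : ℂ) ∈ gaussianPeriods.lattice := mem_lattice_unitPeriodPair.mpr ⟨1, 0, by simp⟩
  have harg : ((π / 2 : ℝ) / π : ℂ) = 1 / 2 := by
    push_cast
    field_simp
  have hhalf := div_pi_notMem_lattice hsin
  have hvalue := weierstrassP_gaussianPeriods hsin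
  rw [harg] at hhalf hvalue
  have hne : gaussianPeriods.weierstrassP (1 / 2) ≠ 0 := by
    rw [hvalue, ofReal_ne_zero]
    have := realP_pi_div_two_pos
    positivity
  have hode := derivWeierstrassP_sq_of_g₃_eq_zero g₃_gaussianPeriods hone hhalf hne
    (div_pi_notMem_lattice hθ)
  rw [derivWeierstrassP_gaussianPeriods hθ, weierstrassP_gaussianPeriods hθ, hvalue] at hode
  norm_cast at hode
  refine mul_left_cancel₀ (pow_ne_zero 6 pi_ne_zero) ?_
  linear_combination hode

lemma deriv_realP_nonpos (hθ : θ ∈ Ioo 0 (π / 2)) : deriv realP θ ≤ 0 := by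
  have hanti := (strictAntiOn_realP.antitoneOn.mono Ioo_subset_Ioc_self).derivWithin_nonpos (x := θ)
  rwa [derivWithin_of_mem_nhds (Ioo_mem_nhds hθ.1 hθ.2)] at hanti

end GaussianLattice

section LemniscateArcsin

open MeasureTheory intervalIntegral

/-- The lemniscate integral `∫₀^v dx / √(1 - x⁴)`, the inverse of the lemniscate sine. -/
noncomputable def lemniscateArcsin (v : ℝ) : ℝ :=
  ∫ x in (0 : ℝ)..v, 1 / √(1 - x ^ 4)

lemma intervalIntegrable_one_div_sqrt_one_sub_pow_four :
    IntervalIntegrable (fun x : ℝ ↦ 1 / √(1 - x ^ 4)) volume 0 1 := by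
  have harcsin : IntervalIntegrable (fun x : ℝ ↦ 1 / √(1 - x ^ 2)) volume 0 1 := by
    refine intervalIntegrable_deriv_of_nonneg continuous_arcsin.continuousOn (fun x hx ↦ ?_)
      fun x _ ↦ by positivity
    rw [min_eq_left zero_le_one, max_eq_right zero_le_one] at hx
    exact hasDerivAt_arcsin (by linarith [hx.1]) hx.2.ne
  refine harcsin.mono_fun' (Measurable.aestronglyMeasurable (by fun_prop)) ?_
  rw [uIoc_of_le zero_le_one]
  filter_upwards [ae_restrict_mem measurableSet_Ioc] with x hx
  rw [Real.norm_of_nonneg (by positivity)]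
  rcases hx.2.eq_or_lt with rfl | hx1
  · simp
  · have hx2 : x ^ 2 < 1 := pow_lt_one₀ hx.1.le hx1 two_ne_zero
    have hx4 : x ^ 4 ≤ x ^ 2 := pow_le_pow_of_le_one hx.1.le hx.2 (by norm_num)
    have : 0 < √(1 - x ^ 2) := Real.sqrt_pos.mpr (by linarith)
    gcongr

lemma continuousOn_lemniscateArcsin : ContinuousOn lemniscateArcsin (Icc 0 1) := by
  have hcont := continuousOn_primitive_interval' intervalIntegrable_one_div_sqrt_one_sub_pow_four
    left_mem_uIcc
  rwa [uIcc_of_le zero_le_one] at hcont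

lemma sqrt_one_sub_pow_four_pos {v : ℝ} (hv : v ∈ Ioo 0 1) : 0 < √(1 - v ^ 4) :=
  Real.sqrt_pos.mpr (sub_pos.mpr (pow_lt_one₀ hv.1.le hv.2 four_ne_zero))

lemma hasDerivAt_lemniscateArcsin {v : ℝ} (hv : v ∈ Ioo 0 1) :
    HasDerivAt lemniscateArcsin (1 / √(1 - v ^ 4)) v := by
  refine integral_hasDerivAt_right ?_ ?_ ?_
  · refine intervalIntegrable_one_div_sqrt_one_sub_pow_four.mono_set ?_
    rw [uIcc_of_le hv.1.le, uIcc_of_le zero_le_one]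
    exact Icc_subset_Icc_right hv.2.le
  · exact Measurable.stronglyMeasurable (by fun_prop) |>.stronglyMeasurableAtFilter
  · exact continuousAt_const.div (by fun_prop) (sqrt_one_sub_pow_four_pos hv).ne'

lemma strictMonoOn_lemniscateArcsin : StrictMonoOn lemniscateArcsin (Icc 0 1) := by
  refine strictMonoOn_of_deriv_pos (convex_Icc 0 1) continuousOn_lemniscateArcsin fun v hv ↦ ?_
  rw [interior_Icc] at hv
  rw [(hasDerivAt_lemniscateArcsin hv).deriv]
  exact one_div_pos.mpr (sqrt_one_sub_pow_four_pos hv)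

lemma lemniscateArcsin_eq_mul_of_hasDerivAt {f : ℝ → ℝ} {c T : ℝ} (hT : 0 < T) (hf0 : f 0 = 0)
    (hcont : ContinuousOn f (Icc 0 T)) (hmaps : MapsTo f (Ioo 0 T) (Ioo 0 1))
    (hderiv : ∀ t ∈ Ioo 0 T, HasDerivAt f (c * √(1 - f t ^ 4)) t) :
    lemniscateArcsin (f T) = c * T := by
  have hmaps' : MapsTo f (Icc 0 T) (Icc 0 1) := by
    have := hmaps.closure_of_continuousOn (by rwa [closure_Ioo hT.ne])
    rwa [closure_Ioo hT.ne, closure_Ioo zero_ne_one] at this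
  have hcomp (t : ℝ) (ht : t ∈ Ioo 0 T) : HasDerivAt (fun s ↦ lemniscateArcsin (f s)) c t := by
    have hsqrt := (sqrt_one_sub_pow_four_pos (hmaps ht)).ne'
    convert! (hasDerivAt_lemniscateArcsin (hmaps ht)).comp t (hderiv t ht) using 1
    field_simp
  obtain ⟨-, -, hslope⟩ := exists_hasDerivAt_eq_slope (fun s ↦ lemniscateArcsin (f s)) (fun _ ↦ c)
    hT (continuousOn_lemniscateArcsin.comp hcont hmaps') hcomp
  rw [eq_div_iff (sub_pos.mpr hT).ne', hf0, lemniscateArcsin, lemniscateArcsin, integral_same,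
    sub_zero, sub_zero] at hslope
  exact hslope.symm

end LemniscateArcsin

section LemniscateSine

variable {θ : ℝ}

/-- The regularization `sin² θ * realP θ` of `realP`, which removes its pole at `θ = 0`. -/
noncomputable def sinSqMulRealP (θ : ℝ) : ℝ :=
  1 - Real.sin θ ^ 2 * (1 / π + 8 * lambertCos θ)

lemma sinSqMulRealP_eq (hθ : Real.sin θ ≠ 0) : sinSqMulRealP θ = Real.sin θ ^ 2 * realP θ := by
  rw [sinSqMulRealP, realP]
  field_simp
  ring

lemma sinSqMulRealP_pos (θ : ℝ) : 0 < sinSqMulRealP θ := by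
  have hlambert := lambertCos_lt_one_div_32 θ
  have hpi : 1 / π < 1 / 3 := by gcongr; exact pi_gt_three
  have hsin := Real.sin_sq_le_one θ
  rw [sinSqMulRealP]
  nlinarith [sq_nonneg (Real.sin θ)]

/-- The lemniscate sine in the variable `θ`, rescaled to take the value `1` at `π / 2`; for
`0 < θ ≤ π / 2` it is `√(realP (π / 2) / realP θ)`. -/
noncomputable def lemniscateSin (θ : ℝ) : ℝ :=
  Real.sin θ * √(realP (π / 2) / sinSqMulRealP θ)

lemma continuous_lemniscateSin : Continuous lemniscateSin := by
  have hcont : Continuous sinSqMulRealP := by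
    have := continuous_lambertCos
    unfold sinSqMulRealP
    fun_prop
  exact Real.continuous_sin.mul
    (continuous_const.div hcont fun θ ↦ (sinSqMulRealP_pos θ).ne').sqrt

lemma lemniscateSin_zero : lemniscateSin 0 = 0 := by simp [lemniscateSin]

lemma lemniscateSin_eq_sqrt (hθ : 0 < Real.sin θ) :
    lemniscateSin θ = √(realP (π / 2) / realP θ) := by
  rw [lemniscateSin, sinSqMulRealP_eq hθ.ne', mul_comm (_ ^ 2), ← div_div,
    Real.sqrt_div' _ (sq_nonneg _), Real.sqrt_sq hθ.le, mul_div_cancel₀ _ hθ.ne']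

lemma lemniscateSin_pi_div_two : lemniscateSin (π / 2) = 1 := by
  rw [lemniscateSin_eq_sqrt (by simp), div_self realP_pi_div_two_pos.ne', Real.sqrt_one]

lemma lemniscateSin_sq (hθ : θ ∈ Ioc 0 (π / 2)) :
    lemniscateSin θ ^ 2 = realP (π / 2) / realP θ := by
  rw [lemniscateSin_eq_sqrt (sin_pos_of_mem_Ioc hθ),
    Real.sq_sqrt (div_nonneg realP_pi_div_two_pos.le (realP_pos hθ).le)]

lemma mapsTo_lemniscateSin : MapsTo lemniscateSin (Ioo 0 (π / 2)) (Ioo 0 1) := by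
  intro θ hθ
  have hθ' := Ioo_subset_Ioc_self hθ
  have hlt := strictAntiOn_realP hθ' (right_mem_Ioc.mpr pi_div_two_pos) hθ.2
  rw [lemniscateSin_eq_sqrt (sin_pos_of_mem_Ioc hθ')]
  refine ⟨Real.sqrt_pos.mpr (div_pos realP_pi_div_two_pos (realP_pos hθ')), ?_⟩
  rw [Real.sqrt_lt' one_pos, one_pow, div_lt_one (realP_pos hθ')]
  exact hlt

lemma lemniscateSin_mem_Icc (hθ : θ ∈ Ioc 0 (π / 2)) : lemniscateSin θ ∈ Icc 0 1 := by
  rcases hθ.2.eq_or_lt with rfl | hlt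
  · simp [lemniscateSin_pi_div_two]
  · exact Ioo_subset_Icc_self (mapsTo_lemniscateSin ⟨hθ.1, hlt⟩)

lemma sqrt_mul_sqrt_one_sub_lemniscateSin_pow_four (hθ : θ ∈ Ioo 0 (π / 2)) :
    √(realP (π / 2)) * √(1 - lemniscateSin θ ^ 4) =
      -(realP (π / 2) * deriv realP θ) / realP θ ^ 2 / (2 * lemniscateSin θ) := by
  have hθ' := Ioo_subset_Ioc_self hθ
  have he := realP_pi_div_two_pos
  have hP := realP_pos hθ'
  obtain ⟨hpos, hlt⟩ := mapsTo_lemniscateSin hθ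
  have hnonneg : 0 ≤ -(realP (π / 2) * deriv realP θ) / realP θ ^ 2 / (2 * lemniscateSin θ) := by
    have := neg_nonneg.mpr (mul_nonpos_of_nonneg_of_nonpos he.le (deriv_realP_nonpos hθ))
    positivity
  have hfour : lemniscateSin θ ^ 4 = (realP (π / 2) / realP θ) ^ 2 := by
    rw [← lemniscateSin_sq hθ', ← pow_mul]
  have hle : 0 ≤ 1 - lemniscateSin θ ^ 4 := sub_nonneg.mpr (pow_le_one₀ hpos.le hlt.le)
  refine (sq_eq_sq₀ (by positivity) hnonneg).mp ?_
  rw [mul_pow, Real.sq_sqrt he.le, Real.sq_sqrt hle, hfour, div_pow _ (2 * _), mul_pow 2,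
    lemniscateSin_sq hθ', div_pow (-_), neg_sq, mul_pow,
    deriv_realP_sq (sin_pos_of_mem_Ioc hθ').ne']
  field_simp
  ring

lemma hasDerivAt_lemniscateSin (hθ : θ ∈ Ioo 0 (π / 2)) :
    HasDerivAt lemniscateSin (√(realP (π / 2)) * √(1 - lemniscateSin θ ^ 4)) θ := by
  have hθ' := Ioo_subset_Ioc_self hθ
  have hsin := sin_pos_of_mem_Ioc hθ'
  have hP := realP_pos hθ'
  have hsqrt := ((hasDerivAt_const θ (realP (π / 2))).fun_div
    (differentiableAt_realP hsin.ne').hasDerivAt hP.ne').sqrt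
      (div_pos realP_pi_div_two_pos hP).ne'
  rw [zero_mul, zero_sub, ← lemniscateSin_eq_sqrt hsin,
    ← sqrt_mul_sqrt_one_sub_lemniscateSin_pow_four hθ] at hsqrt
  refine hsqrt.congr_of_eventuallyEq ?_
  filter_upwards [Real.continuous_sin.continuousAt.eventually_const_lt hsin] with t ht
  exact lemniscateSin_eq_sqrt ht

lemma lemniscateArcsin_lemniscateSin (hθ : θ ∈ Ioc 0 (π / 2)) :
    lemniscateArcsin (lemniscateSin θ) = √(realP (π / 2)) * θ :=
  have hsub : Ioo 0 θ ⊆ Ioo 0 (π / 2) := Ioo_subset_Ioo_right hθ.2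
  lemniscateArcsin_eq_mul_of_hasDerivAt hθ.1 lemniscateSin_zero
    continuous_lemniscateSin.continuousOn (mapsTo_lemniscateSin.mono_left hsub)
    fun _ ht ↦ hasDerivAt_lemniscateSin (hsub ht)

lemma lemniscateArcsin_one : lemniscateArcsin 1 = √(realP (π / 2)) * (π / 2) := by
  rw [← lemniscateArcsin_lemniscateSin (right_mem_Ioc.mpr pi_div_two_pos),
    lemniscateSin_pi_div_two]

lemma lambertCos_eq_tsum_add_one (θ : ℝ) : lambertCos θ =
    ∑' n : ℕ, ((n : ℝ) + 1) * Real.cos (2 * ((n : ℝ) + 1) * θ) /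
      (Real.exp (2 * π * ((n : ℝ) + 1)) - 1) := by
  rw [lambertCos, (summable_lambertCos θ).tsum_eq_zero_add]
  simp

end LemniscateSine

end RamanujanLemniscate

open RamanujanLemniscate in
/-- Ramanujan's inversion formula for the lemniscate integral (proved by
Bhargava–Berndt): if `θμ/√2 = ∫₀ᵛ dx/√(1-x⁴)` with `0 < θ ≤ π/2`,
`0 < v ≤ 1`, and `μ` is determined by `θ = π/2`, `v = 1`, then
`μ²/(2v²) = csc²θ - 1/π - 8 ∑_{n ≥ 1} n cos(2nθ)/(e^{2πn} - 1)`. -/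
theorem ramanujan_lemniscate_inversion (μ θ v : ℝ)
    (hμpos : 0 < μ)
    (hμ : (π / 2) * μ / Real.sqrt 2 = ∫ x in (0 : ℝ)..1, 1 / Real.sqrt (1 - x ^ 4))
    (hθ0 : 0 < θ) (hθ : θ ≤ π / 2) (hv0 : 0 < v) (hv : v ≤ 1)
    (hrel : θ * μ / Real.sqrt 2 = ∫ x in (0 : ℝ)..v, 1 / Real.sqrt (1 - x ^ 4)) :
    μ ^ 2 / (2 * v ^ 2) =
      (Real.sin θ)⁻¹ ^ 2 - 1 / π -
        8 * ∑' n : ℕ, ((n : ℝ) + 1) * Real.cos (2 * ((n : ℝ) + 1) * θ) /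
          (Real.exp (2 * π * ((n : ℝ) + 1)) - 1) := by
  have hθmem : θ ∈ Set.Ioc 0 (π / 2) := ⟨hθ0, hθ⟩
  have hscale : μ / √2 = √(realP (π / 2)) :=
    mul_left_cancel₀ pi_div_two_pos.ne' <| by
      rw [← mul_div_assoc, mul_comm _ (√(realP _)), ← lemniscateArcsin_one, hμ, lemniscateArcsin]
  have hvθ : v = lemniscateSin θ := by
    refine strictMonoOn_lemniscateArcsin.injOn ⟨hv0.le, hv⟩ (lemniscateSin_mem_Icc hθmem) ?_
    rw [lemniscateArcsin_lemniscateSin hθmem, ← hscale, mul_comm, ← mul_div_assoc, hrel,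
      lemniscateArcsin]
  calc μ ^ 2 / (2 * v ^ 2) = (μ / √2) ^ 2 / v ^ 2 := by
        rw [div_pow, Real.sq_sqrt zero_le_two, div_div]
    _ = realP (π / 2) / (realP (π / 2) / realP θ) := by
        rw [hscale, hvθ, Real.sq_sqrt realP_pi_div_two_pos.le, lemniscateSin_sq hθmem]
    _ = realP θ := div_div_cancel₀ realP_pi_div_two_pos.ne'
    _ = _ := by rw [realP, lambertCos_eq_tsum_add_one]
end
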